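/- Let 1 < s < r be integers. For every ε > 0 there exists a constant c > 0 such that for all sufficiently large n divisible by r there exists an n-vertex graph G with minimum degree at least (1 − s/r)·n such that, for p = c·p_s(n), the probability that G^p = G ∪ G_{n,p} contains a K_r-factor is less than ε. -/

import Mathlib

open Finset
open scoped Classical

/-- The degree of a vertex (number of neighbours). -/
noncomputable def degR {V : Type*} (G : SimpleGraph V) (v : V) : ℕ :=
  Nat.card (G.neighborSet v)

/-- The number of edges of a graph on `Fin n`. -/
noncomputable def edgeCount {n : ℕ} (H : SimpleGraph (Fin n)) : ℕ := Nat.card H.edgeSet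

/-- The probability that the binomial random graph `G_{n,p}` satisfies the property `P`. -/
noncomputable def Pr (n : ℕ) (p : ℝ) (P : SimpleGraph (Fin n) → Prop) : ℝ :=
  ∑ H : SimpleGraph (Fin n),
    if P H then p ^ edgeCount H * (1 - p) ^ (n.choose 2 - edgeCount H) else 0

/-- `G` has a `K_r`-factor: a partition of the vertex set into `r`-cliques. -/
def HasCliqueFactor {n : ℕ} (G : SimpleGraph (Fin n)) (r : ℕ) : Prop :=
  ∃ P : Finpartition (Finset.univ : Finset (Fin n)), ∀ c ∈ P.parts, G.IsNClique r c

/-- The threshold function `p_s(n)`: `log n / n` if `s = 2` and `n^{-φ(s)}` with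
`φ(s) = 2s/((s-1)(s+2))` if `s ≥ 3`. -/
noncomputable def pThr (s n : ℕ) : ℝ :=
  if s = 2 then Real.log n / n
  else (n : ℝ) ^ (-(2 * (s : ℝ)) / (((s : ℝ) - 1) * ((s : ℝ) + 2)))

/-- The number of edges of `G` within the vertex set `S`. -/
noncomputable def edgesIn {V : Type*} (G : SimpleGraph V) (S : Set V) : ℕ :=
  Nat.card {e : Sym2 V // e ∈ G.edgeSet ∧ ∀ v ∈ e, v ∈ S}

/-- The number of ordered adjacent pairs between `S` and `T`. -/
noncomputable def edgesBtw {V : Type*} (G : SimpleGraph V) (S T : Set V) : ℕ :=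
  Nat.card {p : V × V // p.1 ∈ S ∧ p.2 ∈ T ∧ G.Adj p.1 p.2}

/-- The edge density of the pair `(S, T)` in `G`. -/
noncomputable def density {V : Type*} (G : SimpleGraph V) (S T : Set V) : ℝ :=
  (edgesBtw G S T : ℝ) / ((S.ncard : ℝ) * (T.ncard : ℝ))

/-- The pair `(S, T)` is `(ε, d)`-regular in `G`. -/
def IsRegularPair {V : Type*} (G : SimpleGraph V) (S T : Set V) (ε d : ℝ) : Prop :=
  ∀ X ⊆ S, ∀ Y ⊆ T, ε * S.ncard ≤ (X.ncard : ℝ) → ε * T.ncard ≤ (Y.ncard : ℝ) →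
    |density G X Y - d| < ε

/-- The pair `(S, T)` is `(ε, d, ϑ)`-super-regular in `G`. -/
def IsSuperRegularPair {V : Type*} (G : SimpleGraph V) (S T : Set V) (ε d ϑ : ℝ) : Prop :=
  IsRegularPair G S T ε d ∧
  (∀ v ∈ S, ϑ * T.ncard ≤ ((T ∩ G.neighborSet v).ncard : ℝ)) ∧
  (∀ v ∈ T, ϑ * S.ncard ≤ ((S ∩ G.neighborSet v).ncard : ℝ))

/-!
Let `G` be complete except inside a set `A` of about `s n / r` vertices. A clique of a `K_r`-factor
of `G ∪ G_{n,p}` that meets `A` in more than `s` vertices contains a `K_{s+1}` inside `A`, and one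
that contains a vertex isolated inside `A` meets `A` in that vertex only. Counting `A` clique by
clique, a factor therefore forces
`#A + #(isolated vertices in A) ≤ s (n / r) + r #(copies of K_{s+1} in A)`.

* For `s = 2`, take `#A = 2 n / r` and no edges inside `A`. At `p = log n / (4 n)` the expected
  number of isolated vertices in `A` is at least `√n / r`, and by Chebyshev's inequality their
  number is concentrated, while the expected number of triangles is polylogarithmic.
* For `s ≥ 3`, take `#A = s n / r + k` with `k ≈ p n / (4 r)`. The minimum degree condition asks for
  degrees at least `k` inside `A`, which a typical sample of `G_{n,p}` provides. Averaged over both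
  this sample and the random edges, the number of `K_{s+1}` in `A` is at most
  `n ^ (s + 1) (2 p) ^ (s + 1 choose 2)`, and `φ(s)` is the exponent balancing this against `p n`.
-/

open MeasureTheory ProbabilityTheory Filter Topology
open scoped unitInterval SimpleGraph

section Moments

variable {Ω ι : Type*} [MeasurableSpace Ω] {μ : Measure Ω} [IsFiniteMeasure μ]

lemma measureReal_le_integral_div {f : Ω → ℝ} (hf₀ : 0 ≤ f) (hf : Integrable f μ) {a : ℝ}
    (ha : 0 < a) {S : Set Ω} (hS : ∀ ω ∈ S, a ≤ f ω) : μ.real S ≤ (∫ ω, f ω ∂μ) / a := by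
  rw [le_div_iff₀' ha]
  calc a * μ.real S ≤ a * μ.real {ω | a ≤ f ω} := by
        gcongr
        exacts [measure_ne_top _ _, hS]
    _ ≤ ∫ ω, f ω ∂μ := mul_meas_ge_le_integral_of_nonneg (.of_forall hf₀) hf a

lemma measureReal_le_half_integral_le {X : Ω → ℝ} (hX : MemLp X 2 μ) (h₀ : 0 < ∫ ω, X ω ∂μ) :
    μ.real {ω | X ω ≤ (∫ ω, X ω ∂μ) / 2} ≤ 4 * Var[X; μ] / (∫ ω, X ω ∂μ) ^ 2 := by
  set m := ∫ ω, X ω ∂μ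
  have far_of_small : {ω | X ω ≤ m / 2} ⊆ {ω | m / 2 ≤ |X ω - m|} := by
    intro ω (hω : X ω ≤ m / 2)
    have : m / 2 ≤ -(X ω - m) := by linarith
    exact this.trans (neg_le_abs _)
  calc μ.real {ω | X ω ≤ m / 2} ≤ μ.real {ω | m / 2 ≤ |X ω - m|} := measureReal_mono far_of_small
    _ ≤ Var[X; μ] / (m / 2) ^ 2 :=
      ENNReal.toReal_le_of_le_ofReal (div_nonneg (variance_nonneg X μ) (sq_nonneg _))
        (meas_ge_le_variance_div_sq hX (half_pos h₀))
    _ = 4 * Var[X; μ] / m ^ 2 := by field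

lemma integral_card_filter (s : Finset ι) (P : ι → Ω → Prop) [∀ i ω, Decidable (P i ω)]
    (hP : ∀ i ∈ s, MeasurableSet {ω | P i ω}) :
    ∫ ω, (#{i ∈ s | P i ω} : ℝ) ∂μ = ∑ i ∈ s, μ.real {ω | P i ω} := by
  have card_eq_sum_indicator (ω : Ω) :
      (#{i ∈ s | P i ω} : ℝ) = ∑ i ∈ s, {ω | P i ω}.indicator 1 ω := by
    simp [Set.indicator_apply]
  simp_rw [card_eq_sum_indicator]
  rw [integral_finsetSum s fun i hi => (integrable_const 1).indicator (hP i hi)]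
  exact sum_congr rfl fun i hi => integral_indicator_one (hP i hi)

lemma integral_card_filter_sq (s : Finset ι) (P : ι → Ω → Prop) [∀ i ω, Decidable (P i ω)]
    (hP : ∀ i ∈ s, MeasurableSet {ω | P i ω}) :
    ∫ ω, (#{i ∈ s | P i ω} : ℝ) ^ 2 ∂μ = ∑ i ∈ s, ∑ j ∈ s, μ.real {ω | P i ω ∧ P j ω} := by
  have sq_eq_card_pairs (ω : Ω) :
      (#{i ∈ s | P i ω} : ℝ) ^ 2 = #{x ∈ s ×ˢ s | P x.1 ω ∧ P x.2 ω} := by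
    rw [filter_product (fun i => P i ω) (fun i => P i ω), card_product, sq, Nat.cast_mul]
  simp_rw [sq_eq_card_pairs]
  rw [integral_card_filter (s ×ˢ s) (fun x ω => P x.1 ω ∧ P x.2 ω), sum_product]
  intro x hx
  exact (hP _ (mem_product.1 hx).1).inter (hP _ (mem_product.1 hx).2)

end Moments

section BinomialRandomGraph

instance discreteMeasurableSpace_simpleGraph {V : Type*} [Finite V] :
    DiscreteMeasurableSpace (SimpleGraph V) :=
  have : MeasurableSingletonClass (SimpleGraph V) :=
    ⟨fun H => by
      rw [← SimpleGraph.edgeSet_injective.preimage_image {H}, Set.image_singleton]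
      exact SimpleGraph.measurable_edgeSet (MeasurableSet.singleton _)⟩
  inferInstance

lemma Pr_eq_measureReal (n : ℕ) (p : I) (P : SimpleGraph (Fin n) → Prop) :
    Pr n p P = G(Fin n, p).real {H | P H} := by
  have weight_eq (H : SimpleGraph (Fin n)) :
      (p : ℝ) ^ edgeCount H * (1 - p) ^ (n.choose 2 - edgeCount H) = G(Fin n, p).real {H} := by
    rw [measureReal_def, SimpleGraph.binomialRandom_singleton, ← Nat.card_coe_set_eq,
      Nat.card_fin, ENNReal.toReal_mul]
    simp [edgeCount]
  simp_rw [Pr, weight_eq, ← sum_filter, sum_measureReal_singleton, coe_filter_univ]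

section Fintype

variable {V : Type*} [Fintype V] [DecidableEq V] {p : I}

lemma binomialRandom_real_singleton (H : SimpleGraph V) :
    G(V, p).real {H} = (∏ _e ∈ H.edgeFinset, (p : ℝ)) *
      ∏ _e ∈ (⊤ : SimpleGraph V).edgeFinset \ H.edgeFinset, (1 - p : ℝ) := by
  rw [prod_const, prod_const, card_sdiff_of_subset (SimpleGraph.edgeFinset_mono le_top),
    SimpleGraph.card_edgeFinset_top_eq_card_choose_two, measureReal_def,
    SimpleGraph.binomialRandom_singleton, ← H.coe_edgeFinset, Set.ncard_coe_finset,
    Nat.card_eq_fintype_card, ENNReal.toReal_mul]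
  simp

lemma sum_edgeFinset_eq_sum_powerset {M : Type*} [AddCommMonoid M] (f : Finset (Sym2 V) → M) :
    ∑ H : SimpleGraph V, f H.edgeFinset = ∑ T ∈ (⊤ : SimpleGraph V).edgeFinset.powerset, f T := by
  refine sum_bij' (fun H _ => H.edgeFinset)
    (fun T _ => SimpleGraph.fromEdgeSet (T : Set (Sym2 V))) ?_ ?_ ?_ ?_ ?_
  · exact fun H _ => mem_powerset.2 (SimpleGraph.edgeFinset_mono le_top)
  · simp
  · simp
  · intro T hT
    have hT : ∀ e ∈ T, ¬ e.IsDiag := by simpa [subset_iff] using hT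
    ext e
    simpa using hT e
  · simp

lemma integral_prod_ite_edgeFinset_top (a b : Sym2 V → ℝ) :
    ∫ H, ∏ e ∈ (⊤ : SimpleGraph V).edgeFinset, (if e ∈ H.edgeSet then a e else b e) ∂G(V, p)
      = ∏ e ∈ (⊤ : SimpleGraph V).edgeFinset, (p * a e + (1 - p) * b e) := by
  have split_prod (H : SimpleGraph V) :
      ∏ e ∈ (⊤ : SimpleGraph V).edgeFinset, (if e ∈ H.edgeSet then a e else b e)
        = (∏ e ∈ H.edgeFinset, a e) * ∏ e ∈ (⊤ : SimpleGraph V).edgeFinset \ H.edgeFinset, b e := by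
    rw [← prod_sdiff (SimpleGraph.edgeFinset_mono (le_top : H ≤ ⊤)), mul_comm]
    congr 1 <;> refine prod_congr rfl fun e he => ?_
    · simp [SimpleGraph.mem_edgeFinset.1 he]
    · simp_all
  rw [integral_fintype .of_finite, prod_add,
    ← sum_edgeFinset_eq_sum_powerset fun T => (∏ e ∈ T, (p * a e)) *
      ∏ e ∈ (⊤ : SimpleGraph V).edgeFinset \ T, ((1 - p) * b e)]
  refine sum_congr rfl fun H _ => ?_
  rw [split_prod, binomialRandom_real_singleton, smul_eq_mul, mul_mul_mul_comm,
    ← prod_mul_distrib, ← prod_mul_distrib]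

end Fintype

variable {V : Type*} [Finite V] {p : I}

lemma integral_prod_ite_edgeSet {F : Finset (Sym2 V)} (hF : ∀ e ∈ F, ¬ e.IsDiag)
    (a b : Sym2 V → ℝ) :
    ∫ H, ∏ e ∈ F, (if e ∈ H.edgeSet then a e else b e) ∂G(V, p)
      = ∏ e ∈ F, (p * a e + (1 - p) * b e) := by
  have := Fintype.ofFinite V
  have extend_prod (f : Sym2 V → ℝ) :
      ∏ e ∈ F, f e = ∏ e ∈ (⊤ : SimpleGraph V).edgeFinset, if e ∈ F then f e else 1 := by
    rw [prod_ite_mem, inter_eq_right.2 fun e he => by simpa using hF e he]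
  have pull_ite (H : SimpleGraph V) (e : Sym2 V) :
      (if e ∈ F then if e ∈ H.edgeSet then a e else b e else 1)
        = if e ∈ H.edgeSet then (if e ∈ F then a e else 1) else (if e ∈ F then b e else 1) := by
    grind
  simp_rw [extend_prod, pull_ite]
  rw [integral_prod_ite_edgeFinset_top]
  refine prod_congr rfl fun e _ => ?_
  split_ifs <;> ring

lemma measureReal_forall_notMem_edgeSet {F : Finset (Sym2 V)} (hF : ∀ e ∈ F, ¬ e.IsDiag) :
    G(V, p).real {H | ∀ e ∈ F, e ∉ H.edgeSet} = (1 - p : ℝ) ^ #F := by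
  have indicator_eq (H : SimpleGraph V) :
      {H : SimpleGraph V | ∀ e ∈ F, e ∉ H.edgeSet}.indicator (1 : SimpleGraph V → ℝ) H
        = ∏ e ∈ F, if e ∈ H.edgeSet then 0 else 1 := by
    simp_rw [← ite_not _ (1 : ℝ) 0, prod_boole]
    simp [Set.indicator_apply]
  rw [← integral_indicator_one .of_discrete]
  simp_rw [indicator_eq]
  rw [integral_prod_ite_edgeSet hF]
  simp

lemma measureReal_forall_mem_edgeSet_sup {F : Finset (Sym2 V)} (hF : ∀ e ∈ F, ¬ e.IsDiag)
    (H₀ : SimpleGraph V) :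
    G(V, p).real {H | ∀ e ∈ F, e ∈ (H₀ ⊔ H).edgeSet}
      = ∏ e ∈ F, if e ∈ H₀.edgeSet then 1 else (p : ℝ) := by
  have indicator_eq (H : SimpleGraph V) :
      {H : SimpleGraph V | ∀ e ∈ F, e ∈ (H₀ ⊔ H).edgeSet}.indicator (1 : SimpleGraph V → ℝ) H
        = ∏ e ∈ F, if e ∈ H.edgeSet then 1 else if e ∈ H₀.edgeSet then 1 else 0 := by
    simp_rw [← ite_or, prod_boole]
    simp [Set.indicator_apply, or_comm]
  rw [← integral_indicator_one .of_discrete]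
  simp_rw [indicator_eq]
  rw [integral_prod_ite_edgeSet hF]
  refine prod_congr rfl fun e _ => ?_
  split_ifs <;> ring

end BinomialRandomGraph

section LocalStatistics

variable {V : Type*}

/-- The potential edges joining `v` to the other vertices of `A`. -/
noncomputable def starEdges (A : Finset V) (v : V) : Finset (Sym2 V) :=
  (A.erase v).image fun w => s(v, w)

/-- The potential edges with both ends in `S`. -/
noncomputable def pairsIn (S : Finset V) : Finset (Sym2 V) :=
  S.offDiag.image (Function.uncurry Sym2.mk)

/-- The number of neighbours of `v` in `A`. -/
noncomputable def degreeIn (A : Finset V) (H : SimpleGraph V) (v : V) : ℕ :=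
  #{w ∈ A | H.Adj v w}

/-- The isolated vertices of the subgraph of `H` induced on `A`. -/
noncomputable def isolatedIn (A : Finset V) (H : SimpleGraph V) : Finset V :=
  {v ∈ A | ∀ w ∈ A, ¬ H.Adj v w}

/-- The copies of `K_t` of `H` inside `A`, as vertex sets. -/
noncomputable def cliquesIn (A : Finset V) (t : ℕ) (H : SimpleGraph V) : Finset (Finset V) :=
  {S ∈ A.powersetCard t | H.IsClique (S : Set V)}

/-- The expected number of isolated vertices of the subgraph of `G(V, p)` induced on a set of `a`
vertices. -/
noncomputable def meanIsolated (a : ℕ) (p : ℝ) : ℝ := a * (1 - p) ^ (a - 1)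

lemma mem_isolatedIn {A : Finset V} {H : SimpleGraph V} {v : V} :
    v ∈ isolatedIn A H ↔ v ∈ A ∧ ∀ w ∈ A, ¬ H.Adj v w :=
  mem_filter

lemma mem_cliquesIn {A S : Finset V} {t : ℕ} {H : SimpleGraph V} :
    S ∈ cliquesIn A t H ↔ (S ⊆ A ∧ #S = t) ∧ H.IsClique (S : Set V) := by
  rw [cliquesIn, mem_filter, mem_powersetCard]

lemma mem_starEdges {A : Finset V} {v : V} {e : Sym2 V} :
    e ∈ starEdges A v ↔ ∃ w ∈ A, w ≠ v ∧ s(v, w) = e := by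
  simp only [starEdges, mem_image, mem_erase]
  grind

lemma not_isDiag_of_mem_starEdges {A : Finset V} {v : V} {e : Sym2 V} (he : e ∈ starEdges A v) :
    ¬ e.IsDiag := by
  obtain ⟨w, -, hwv, rfl⟩ := mem_starEdges.1 he
  simpa using hwv.symm

lemma card_starEdges {A : Finset V} {v : V} (hv : v ∈ A) : #(starEdges A v) = #A - 1 := by
  rw [starEdges, card_image_of_injective _ fun _ _ => Sym2.congr_right.1, card_erase_of_mem hv]

lemma starEdges_inter_starEdges_subset (A : Finset V) {u v : V} (huv : u ≠ v) :
    starEdges A u ∩ starEdges A v ⊆ {s(u, v)} := by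
  intro e he
  obtain ⟨⟨w, -, -, rfl⟩, x, -, -, hx⟩ := (mem_inter.1 he).imp mem_starEdges.1 mem_starEdges.1
  grind

lemma le_card_starEdges_union {A : Finset V} {u v : V} (hu : u ∈ A) (hv : v ∈ A) (huv : u ≠ v) :
    2 * #A - 3 ≤ #(starEdges A u ∪ starEdges A v) := by
  have card_inter_le := card_le_card (starEdges_inter_starEdges_subset A huv)
  have card_union := card_union_add_card_inter (starEdges A u) (starEdges A v)
  rw [card_starEdges hu, card_starEdges hv] at card_union
  rw [card_singleton] at card_inter_le
  omega

lemma forall_not_adj_iff_starEdges {A : Finset V} {H : SimpleGraph V} {v : V} :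
    (∀ w ∈ A, ¬ H.Adj v w) ↔ ∀ e ∈ starEdges A v, e ∉ H.edgeSet := by
  simp only [mem_starEdges]
  constructor
  · rintro h _ ⟨w, hw, -, rfl⟩
    exact h w hw
  · exact fun h w hw hvw => h s(v, w) ⟨w, hw, hvw.ne', rfl⟩ hvw

lemma not_isDiag_of_mem_pairsIn {S : Finset V} {e : Sym2 V} (he : e ∈ pairsIn S) :
    ¬ e.IsDiag := by
  simp only [pairsIn, mem_image, mem_offDiag, Prod.exists] at he
  obtain ⟨a, b, ⟨-, -, hab⟩, rfl⟩ := he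
  exact hab

lemma card_pairsIn (S : Finset V) : #(pairsIn S) = (#S).choose 2 :=
  Sym2.card_image_offDiag S

lemma isClique_iff_pairsIn {H : SimpleGraph V} {S : Finset V} :
    H.IsClique (S : Set V) ↔ ∀ e ∈ pairsIn S, e ∈ H.edgeSet := by
  simp only [pairsIn, forall_mem_image, mem_offDiag, Prod.forall, Function.uncurry]
  exact ⟨fun h a b ⟨ha, hb, hab⟩ => h ha hb hab, fun h a ha b hb hab => h a b ⟨ha, hb, hab⟩⟩

lemma half_pow_degreeIn (A : Finset V) (H : SimpleGraph V) (v : V) :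
    (1 / 2 : ℝ) ^ degreeIn A H v = ∏ e ∈ starEdges A v, if e ∈ H.edgeSet then 1 / 2 else 1 := by
  have adj_filter : {w ∈ A | H.Adj v w} = {w ∈ A.erase v | H.Adj v w} := by
    ext w
    simp only [mem_filter, mem_erase]
    grind [SimpleGraph.Adj.ne]
  rw [starEdges, prod_image fun _ _ _ _ => Sym2.congr_right.1, ← prod_filter, prod_const,
    degreeIn, adj_filter]
  rfl

variable [Finite V] {p : I}

lemma measureReal_degreeIn_lt_le {A : Finset V} {v : V} (hv : v ∈ A) (k : ℕ) :
    G(V, p).real {H | degreeIn A H v < k} ≤ 2 ^ k * (1 - p / 2 : ℝ) ^ (#A - 1) := by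
  have mean : ∫ H, (1 / 2 : ℝ) ^ degreeIn A H v ∂G(V, p) = (1 - p / 2 : ℝ) ^ (#A - 1) := by
    simp_rw [half_pow_degreeIn]
    rw [integral_prod_ite_edgeSet fun _ => not_isDiag_of_mem_starEdges, prod_const,
      card_starEdges hv]
    ring
  have markov := measureReal_le_integral_div (μ := G(V, p)) (a := (1 / 2 : ℝ) ^ k)
    (f := fun H => (1 / 2 : ℝ) ^ degreeIn A H v) (S := {H | degreeIn A H v < k})
    (fun H => by positivity) .of_finite (by positivity)
    (fun H hH => pow_le_pow_of_le_one (by norm_num) (by norm_num) (le_of_lt hH))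
  rwa [mean, one_div, inv_pow, div_inv_eq_mul, mul_comm] at markov

lemma integral_card_isolatedIn (A : Finset V) :
    ∫ H, (#(isolatedIn A H) : ℝ) ∂G(V, p) = meanIsolated #A p := by
  simp_rw [isolatedIn]
  rw [meanIsolated, integral_card_filter A _ fun _ _ => .of_discrete, ← nsmul_eq_mul, ← sum_const]
  refine sum_congr rfl fun v hv => ?_
  simp_rw [forall_not_adj_iff_starEdges]
  rw [measureReal_forall_notMem_edgeSet fun _ => not_isDiag_of_mem_starEdges, card_starEdges hv]

lemma measureReal_isolated_pair_le {A : Finset V} {u v : V} (hu : u ∈ A) (hv : v ∈ A)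
    (huv : u ≠ v) :
    G(V, p).real {H | (∀ w ∈ A, ¬ H.Adj u w) ∧ ∀ w ∈ A, ¬ H.Adj v w}
      ≤ (1 - p : ℝ) ^ (2 * #A - 3) := by
  simp_rw [forall_not_adj_iff_starEdges, ← forall_mem_union]
  rw [measureReal_forall_notMem_edgeSet]
  · exact pow_le_pow_of_le_one (by grind) (by grind) (le_card_starEdges_union hu hv huv)
  · exact fun e he => (mem_union.1 he).elim not_isDiag_of_mem_starEdges not_isDiag_of_mem_starEdges

lemma integral_card_isolatedIn_sq_le (A : Finset V) :
    ∫ H, (#(isolatedIn A H) : ℝ) ^ 2 ∂G(V, p)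
      ≤ meanIsolated #A p + (#A : ℝ) ^ 2 * (1 - p : ℝ) ^ (2 * #A - 3) := by
  have hq : 0 ≤ (1 - p : ℝ) := sub_nonneg.2 p.2.2
  have pairs_at {u : V} (hu : u ∈ A) :
      ∑ v ∈ A.erase u, G(V, p).real {H | (∀ w ∈ A, ¬ H.Adj u w) ∧ ∀ w ∈ A, ¬ H.Adj v w}
        ≤ #A * (1 - p : ℝ) ^ (2 * #A - 3) := by
    refine (sum_le_card_nsmul _ _ _ fun v hv =>
      measureReal_isolated_pair_le hu (mem_of_mem_erase hv) (ne_of_mem_erase hv).symm).trans ?_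
    rw [nsmul_eq_mul]
    gcongr
    exact erase_subset u A
  simp_rw [← integral_card_isolatedIn]
  simp_rw [isolatedIn]
  rw [integral_card_filter_sq A _ fun _ _ => .of_discrete,
    integral_card_filter A _ fun _ _ => .of_discrete, sq (#A : ℝ), mul_assoc, ← nsmul_eq_mul,
    ← sum_const, ← sum_add_distrib]
  refine sum_le_sum fun u hu => ?_
  rw [← add_sum_erase A _ hu]
  simp_rw [and_self]
  gcongr
  exact pairs_at hu

lemma variance_card_isolatedIn_le {A : Finset V} (hA : 2 ≤ #A) (hp : (p : ℝ) ≤ 1 / 2) :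
    Var[fun H => (#(isolatedIn A H) : ℝ); G(V, p)]
      ≤ meanIsolated #A p + 2 * p * meanIsolated #A p ^ 2 := by
  have hp₀ : 0 ≤ (p : ℝ) := p.2.1
  set Y : ℝ := (#A : ℝ) ^ 2 * (1 - p : ℝ) ^ (2 * #A - 3) with hY
  have hY₀ : 0 ≤ Y := mul_nonneg (sq_nonneg _) (pow_nonneg (by linarith) _)
  have mean_sq : meanIsolated #A p ^ 2 = Y * (1 - p) := by
    rw [meanIsolated, hY, mul_pow, ← pow_mul, mul_assoc, ← pow_succ]
    congr 2
    omega
  have pairs_le : Y ≤ (1 + 2 * p) * meanIsolated #A p ^ 2 := by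
    rw [mean_sq]
    have : 0 ≤ Y * (p * (1 - 2 * p)) := mul_nonneg hY₀ (mul_nonneg hp₀ (by linarith))
    linarith
  have second_moment := integral_card_isolatedIn_sq_le (p := p) A
  rw [variance_eq_sub .of_discrete, integral_card_isolatedIn]
  simp only [Pi.pow_apply]
  linarith

lemma measureReal_isClique_sup (H₀ : SimpleGraph V) (S : Finset V) :
    G(V, p).real {H | (H₀ ⊔ H).IsClique (S : Set V)}
      = ∏ e ∈ pairsIn S, if e ∈ H₀.edgeSet then 1 else (p : ℝ) := by
  simp_rw [isClique_iff_pairsIn]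
  exact measureReal_forall_mem_edgeSet_sup (fun _ => not_isDiag_of_mem_pairsIn) H₀

lemma integral_card_cliquesIn_sup (H₀ : SimpleGraph V) (A : Finset V) (t : ℕ) :
    ∫ H, (#(cliquesIn A t (H₀ ⊔ H)) : ℝ) ∂G(V, p)
      = ∑ S ∈ A.powersetCard t, ∏ e ∈ pairsIn S, if e ∈ H₀.edgeSet then 1 else (p : ℝ) := by
  simp_rw [cliquesIn, ← measureReal_isClique_sup]
  convert integral_card_filter (μ := G(V, p)) (A.powersetCard t)
    (fun S H => (H₀ ⊔ H).IsClique (S : Set V)) fun _ _ => .of_discrete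

lemma integral_card_cliquesIn (A : Finset V) (t : ℕ) :
    ∫ H, (#(cliquesIn A t H) : ℝ) ∂G(V, p) = (#A).choose t * (p : ℝ) ^ t.choose 2 := by
  have := integral_card_cliquesIn_sup (p := p) ⊥ A t
  simp only [bot_sup_eq, SimpleGraph.edgeSet_bot, Set.mem_empty_iff_false, if_false, prod_const,
    card_pairsIn] at this
  rw [this, sum_powersetCard t A fun i => (p : ℝ) ^ i.choose 2, nsmul_eq_mul]

lemma integral_integral_card_cliquesIn_sup (A : Finset V) (t : ℕ) :
    ∫ H₀, ∫ H, (#(cliquesIn A t (H₀ ⊔ H)) : ℝ) ∂G(V, p) ∂G(V, p)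
      = (#A).choose t * (p + (1 - p) * p : ℝ) ^ t.choose 2 := by
  simp_rw [integral_card_cliquesIn_sup]
  rw [integral_finsetSum _ fun _ _ => .of_finite]
  simp_rw [integral_prod_ite_edgeSet fun _ => not_isDiag_of_mem_pairsIn, mul_one, prod_const,
    card_pairsIn]
  rw [sum_powersetCard t A fun i => (p + (1 - p) * p : ℝ) ^ i.choose 2, nsmul_eq_mul]

end LocalStatistics

section CliqueFactor

variable {V : Type*} {A : Finset V} {K : SimpleGraph V}

section Parts

variable [DecidableEq V] {r s : ℕ}

lemma inter_isolatedIn_eq_empty {c : Finset V} (hc : K.IsClique (c : Set V))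
    (hcA : 1 < #(c ∩ A)) : c ∩ isolatedIn A K = ∅ := by
  refine eq_empty_of_forall_notMem fun v hv => ?_
  obtain ⟨hvc, hv_iso⟩ := mem_inter.1 hv
  obtain ⟨w, hw, hwv⟩ := exists_mem_ne hcA v
  obtain ⟨hwc, hwA⟩ := mem_inter.1 hw
  exact (mem_isolatedIn.1 hv_iso).2 w hwA (hc hvc hwc hwv.symm)

lemma card_inter_add_card_inter_isolatedIn_le (hs : 1 < s) {c : Finset V}
    (hc : K.IsNClique r c) :
    #(c ∩ A) + #(c ∩ isolatedIn A K) ≤ s + if s + 1 ≤ #(c ∩ A) then r else 0 := by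
  have isolated_le : #(c ∩ isolatedIn A K) ≤ #(c ∩ A) :=
    card_le_card (inter_subset_inter_left (filter_subset _ A))
  have inter_le : #(c ∩ A) ≤ r := hc.card_eq ▸ card_le_card inter_subset_left
  rcases le_or_gt #(c ∩ A) 1 with h | h
  · split_ifs <;> omega
  · rw [inter_isolatedIn_eq_empty hc.isClique h, card_empty]
    split_ifs <;> omega

variable [Fintype V] {P : Finpartition (univ : Finset V)}

lemma sum_card_parts_inter (P : Finpartition (univ : Finset V)) (B : Finset V) :
    ∑ c ∈ P.parts, #(c ∩ B) = #B := by
  simp_rw [inter_comm _ B]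
  rw [sum_card_inter (n := 1), mul_one]
  intro v _
  obtain ⟨c, hc, hc_unique⟩ := P.existsUnique_mem (mem_univ v)
  refine card_eq_one.2 ⟨c, ?_⟩
  grind

lemma card_filter_parts_le_card_cliquesIn (hP : ∀ c ∈ P.parts, K.IsClique (c : Set V)) (t : ℕ) :
    #{c ∈ P.parts | t + 1 ≤ #(c ∩ A)} ≤ #(cliquesIn A (t + 1) K) := by
  have exists_subset (c : Finset V) (hc : c ∈ P.parts.filter fun c => t + 1 ≤ #(c ∩ A)) :
      ∃ S ⊆ c ∩ A, #S = t + 1 := exists_subset_card_eq (mem_filter.1 hc).2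
  choose! S hS hS_card using exists_subset
  refine card_le_card_of_injOn S (fun c hc => ?_) fun c hc d hd hcd => ?_
  · have S_clique := (hP c (mem_filter.1 hc).1).subset
      (coe_subset.2 ((hS c hc).trans inter_subset_left))
    exact mem_cliquesIn.2 ⟨⟨(hS c hc).trans inter_subset_right, hS_card c hc⟩, S_clique⟩
  · obtain ⟨v, hv⟩ := card_pos.1 (t.succ_pos.trans_eq (hS_card c hc).symm)
    exact P.eq_of_mem_parts (mem_filter.1 hc).1 (mem_filter.1 hd).1
      (mem_inter.1 (hS c hc hv)).1 (mem_inter.1 (hS d hd (hcd ▸ hv))).1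

lemma card_add_card_isolatedIn_le (hs : 1 < s) (hP : ∀ c ∈ P.parts, K.IsNClique r c)
    (A : Finset V) :
    #A + #(isolatedIn A K) ≤ s * #P.parts + r * #(cliquesIn A (s + 1) K) := by
  calc #A + #(isolatedIn A K) = ∑ c ∈ P.parts, (#(c ∩ A) + #(c ∩ isolatedIn A K)) := by
        rw [sum_add_distrib, sum_card_parts_inter, sum_card_parts_inter]
    _ ≤ ∑ c ∈ P.parts, (s + if s + 1 ≤ #(c ∩ A) then r else 0) :=
        sum_le_sum fun c hc => card_inter_add_card_inter_isolatedIn_le hs (hP c hc)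
    _ = s * #P.parts + r * #{c ∈ P.parts | s + 1 ≤ #(c ∩ A)} := by
        rw [sum_add_distrib, ← sum_filter, sum_const, sum_const, smul_eq_mul, smul_eq_mul,
          mul_comm s, mul_comm r]
    _ ≤ s * #P.parts + r * #(cliquesIn A (s + 1) K) := by
        have := card_filter_parts_le_card_cliquesIn (A := A) (fun c hc => (hP c hc).isClique) s
        gcongr

end Parts

/-- The extremal graph: it agrees with `H` inside `A`, and every pair of distinct vertices not
contained in `A` is an edge. -/
def completeOutside (A : Finset V) (H : SimpleGraph V) : SimpleGraph V where
  Adj u v := u ≠ v ∧ (u ∈ A → v ∈ A → H.Adj u v)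
  symm := ⟨fun _ _ h => ⟨h.1.symm, fun hv hu => (h.2 hu hv).symm⟩⟩
  loopless := ⟨fun _ h => h.1 rfl⟩

lemma completeOutside_sup_adj_of_mem (H₀ H : SimpleGraph V) {u v : V} (hu : u ∈ A) (hv : v ∈ A) :
    (completeOutside A H₀ ⊔ H).Adj u v ↔ (H₀ ⊔ H).Adj u v :=
  or_congr_left ⟨fun h => h.2 hu hv, fun h => ⟨h.ne, fun _ _ => h⟩⟩

lemma isolatedIn_congr {K' : SimpleGraph V} (h : ∀ u ∈ A, ∀ v ∈ A, K.Adj u v ↔ K'.Adj u v) :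
    isolatedIn A K = isolatedIn A K' :=
  filter_congr fun u hu => forall₂_congr fun v hv => not_congr (h u hu v hv)

lemma cliquesIn_congr {K' : SimpleGraph V} (h : ∀ u ∈ A, ∀ v ∈ A, K.Adj u v ↔ K'.Adj u v)
    (t : ℕ) : cliquesIn A t K = cliquesIn A t K' := by
  refine filter_congr fun S hS => ?_
  have hSA := (mem_powersetCard.1 hS).1
  exact forall₂_congr fun u hu => forall₂_congr fun v hv =>
    imp_congr_right fun _ => h u (hSA hu) v (hSA hv)

lemma degR_completeOutside_of_mem [Fintype V] [DecidableEq V] (H : SimpleGraph V) {v : V}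
    (hv : v ∈ A) : degR (completeOutside A H) v = #Aᶜ + degreeIn A H v := by
  have neighborSet_eq : (completeOutside A H).neighborSet v
      = (Aᶜ ∪ {w ∈ A | H.Adj v w} : Finset V) := by
    ext w
    simp only [SimpleGraph.mem_neighborSet, completeOutside, coe_union, Set.mem_union, mem_coe,
      mem_compl, mem_filter]
    grind [SimpleGraph.Adj.ne]
  rw [degR, Nat.card_coe_set_eq, neighborSet_eq, Set.ncard_coe_finset, degreeIn,
    card_union_of_disjoint (disjoint_compl_left.mono_right (filter_subset _ _))]

lemma degR_completeOutside_of_notMem [Fintype V] (H : SimpleGraph V) {v : V}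
    (hv : v ∉ A) : degR (completeOutside A H) v = Fintype.card V - 1 := by
  have neighborSet_eq : (completeOutside A H).neighborSet v = (univ.erase v : Finset V) := by
    ext w
    simp [completeOutside, hv, eq_comm]
  rw [degR, Nat.card_coe_set_eq, neighborSet_eq, Set.ncard_coe_finset,
    card_erase_of_mem (mem_univ v), card_univ]

lemma card_le_degR_completeOutside_add [Fintype V] {H : SimpleGraph V} {k d : ℕ}
    (hH : ∀ v ∈ A, k ≤ degreeIn A H v) (hA : #A ≤ d + k) (hd : 0 < d) (v : V) :
    Fintype.card V ≤ degR (completeOutside A H) v + d := by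
  by_cases hv : v ∈ A
  · have degree_inside := hH v hv
    rw [degR_completeOutside_of_mem H hv, card_compl]
    omega
  · rw [degR_completeOutside_of_notMem H hv]
    omega

lemma one_sub_div_mul_le_degR {n r s k m : ℕ} (hn : n = r * m) (hr : 0 < r) (hs : 0 < s)
    (hm : 0 < m) {A : Finset (Fin n)} (hA : #A = s * m + k) {H : SimpleGraph (Fin n)}
    (hH : ∀ v ∈ A, k ≤ degreeIn A H v) (v : Fin n) :
    (1 - (s : ℝ) / r) * n ≤ degR (completeOutside A H) v := by
  have bound : (n : ℝ) ≤ degR (completeOutside A H) v + s * m := by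
    have := card_le_degR_completeOutside_add hH hA.le (Nat.mul_pos hs hm) v
    rw [Fintype.card_fin] at this
    exact_mod_cast this
  have target : (1 - (s : ℝ) / r) * n = n - s * m := by
    rw [hn, Nat.cast_mul]
    field
  linarith

lemma card_add_card_isolatedIn_le_of_hasCliqueFactor {n r s m : ℕ} (hn : n = r * m) (hr : 0 < r)
    (hs : 1 < s) (A : Finset (Fin n)) {H₀ H : SimpleGraph (Fin n)}
    (h : HasCliqueFactor (completeOutside A H₀ ⊔ H) r) :
    #A + #(isolatedIn A (H₀ ⊔ H)) ≤ s * m + r * #(cliquesIn A (s + 1) (H₀ ⊔ H)) := by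
  obtain ⟨P, hP⟩ := h
  have card_parts : #P.parts = m := by
    have sum_card := P.sum_card_parts
    rw [sum_congr rfl fun c hc => (hP c hc).card_eq, sum_const, card_univ, Fintype.card_fin,
      smul_eq_mul, mul_comm] at sum_card
    exact Nat.eq_of_mul_eq_mul_left hr (sum_card.trans hn)
  have agree : ∀ u ∈ A, ∀ v ∈ A, (completeOutside A H₀ ⊔ H).Adj u v ↔ (H₀ ⊔ H).Adj u v :=
    fun u hu v hv => completeOutside_sup_adj_of_mem H₀ H hu hv
  rw [← isolatedIn_congr agree, ← cliquesIn_congr agree, ← card_parts]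
  exact card_add_card_isolatedIn_le hs hP A

end CliqueFactor

section TriangleThreshold

lemma meanIsolated_pos {a : ℕ} {p : ℝ} (ha : 0 < a) (hp : p < 1) : 0 < meanIsolated a p :=
  mul_pos (Nat.cast_pos.2 ha) (pow_pos (sub_pos.2 hp) _)

lemma measureReal_card_isolatedIn_le_half_le {V : Type*} [Finite V] {p : I} {A : Finset V}
    (hA : 2 ≤ #A) (hp : (p : ℝ) ≤ 1 / 2) :
    G(V, p).real {H | (#(isolatedIn A H) : ℝ) ≤ meanIsolated #A p / 2}
      ≤ 4 / meanIsolated #A p + 8 * p := by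
  have mean_pos : 0 < meanIsolated #A p := meanIsolated_pos (by omega) (by linarith)
  have chebyshev := measureReal_le_half_integral_le (μ := G(V, p))
    (X := fun H => (#(isolatedIn A H) : ℝ)) .of_discrete (by rwa [integral_card_isolatedIn])
  rw [integral_card_isolatedIn] at chebyshev
  calc _ ≤ _ := chebyshev
    _ ≤ 4 * (meanIsolated #A p + 2 * p * meanIsolated #A p ^ 2) / meanIsolated #A p ^ 2 := by
      gcongr
      exact variance_card_isolatedIn_le hA hp
    _ = 4 / meanIsolated #A p + 8 * p := by field

lemma measureReal_lt_mul_card_cliquesIn_le {V : Type*} [Finite V] {p : I} (A : Finset V) (t : ℕ)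
    {b x : ℝ} (hb : 0 ≤ b) (hx : 0 < x) :
    G(V, p).real {H | x < b * #(cliquesIn A t H)} ≤ b * (#A ^ t * p ^ t.choose 2) / x := by
  have markov := measureReal_le_integral_div (μ := G(V, p)) (a := x)
    (f := fun H => b * (#(cliquesIn A t H) : ℝ)) (S := {H | x < b * #(cliquesIn A t H)})
    (fun H => by positivity) .of_finite hx fun H hH => le_of_lt hH
  rw [integral_const_mul, integral_card_cliquesIn] at markov
  refine markov.trans ?_
  have : 0 ≤ (p : ℝ) := p.2.1
  gcongr
  exact_mod_cast Nat.choose_le_pow #A t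

lemma measureReal_hasCliqueFactor_completeOutside_bot_le {n r m : ℕ} {p : I} (hn : n = r * m)
    (hr : 0 < r) (hm : 0 < m) (hp : (p : ℝ) ≤ 1 / 2) {A : Finset (Fin n)} (hA : #A = 2 * m) :
    G(Fin n, p).real {H | HasCliqueFactor (completeOutside A ⊥ ⊔ H) r}
      ≤ 4 / meanIsolated #A p + 8 * p + 2 * r * (n * p) ^ 3 / meanIsolated #A p := by
  have mean_pos : 0 < meanIsolated #A p := meanIsolated_pos (by omega) (by linarith)
  set μ := meanIsolated #A p
  have factor_subset : {H | HasCliqueFactor (completeOutside A ⊥ ⊔ H) r}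
      ⊆ {H | (#(isolatedIn A H) : ℝ) ≤ μ / 2} ∪ {H | μ / 2 < (r : ℝ) * #(cliquesIn A 3 H)} := by
    intro H hH
    have count := card_add_card_isolatedIn_le_of_hasCliqueFactor hn hr one_lt_two A hH
    rw [bot_sup_eq, hA, Nat.add_le_add_iff_left] at count
    rw [Set.mem_union, or_iff_not_imp_left]
    intro (many_isolated : ¬ (#(isolatedIn A H) : ℝ) ≤ μ / 2)
    exact (not_le.1 many_isolated).trans_le (by exact_mod_cast count)
  have clique_bound : (r : ℝ) * ((#A : ℝ) ^ 3 * p ^ Nat.choose 3 2) / (μ / 2)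
      ≤ 2 * r * (n * p) ^ 3 / μ := by
    have hp₀ : 0 ≤ (p : ℝ) := p.2.1
    have hAn : (#A : ℝ) ≤ n := by exact_mod_cast card_finset_fin_le A
    calc (r : ℝ) * ((#A : ℝ) ^ 3 * p ^ Nat.choose 3 2) / (μ / 2)
        = 2 * r * (#A * p : ℝ) ^ 3 / μ := by
          rw [Nat.choose_succ_self_right]
          field
      _ ≤ 2 * r * (n * p : ℝ) ^ 3 / μ := by gcongr
  calc _ ≤ _ := measureReal_mono factor_subset
    _ ≤ _ := measureReal_union_le _ _
    _ ≤ _ := add_le_add (measureReal_card_isolatedIn_le_half_le (by omega) hp)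
      ((measureReal_lt_mul_card_cliquesIn_le A 3 r.cast_nonneg (half_pos mean_pos)).trans
        clique_bound)

lemma exp_neg_two_mul_le_one_sub {x : ℝ} (hx₀ : 0 ≤ x) (hx : x ≤ 1 / 2) :
    Real.exp (-(2 * x)) ≤ 1 - x := by
  rw [Real.exp_neg, inv_le_iff_one_le_mul₀ (Real.exp_pos _)]
  calc (1 : ℝ) ≤ (1 - x) * (2 * x + 1) := by nlinarith
    _ ≤ (1 - x) * Real.exp (2 * x) := by
      gcongr
      exacts [by linarith, Real.add_one_le_exp _]

lemma inv_sqrt_le_one_sub_pow {n a : ℕ} {p : ℝ} (hn : 0 < n) (hp₀ : 0 ≤ p) (hp : p ≤ 1 / 2)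
    (hpn : n * p = Real.log n / 4) (ha : a ≤ n) : (√n)⁻¹ ≤ (1 - p) ^ a := by
  have hn' : (0 : ℝ) < n := Nat.cast_pos.2 hn
  calc (√n)⁻¹ = Real.exp (-(2 * p)) ^ n := by
        rw [← Real.exp_nat_mul, ← Real.exp_log hn', ← Real.exp_half, ← Real.exp_neg,
          Real.exp_log hn']
        congr 1
        linarith
    _ ≤ (1 - p) ^ n := by
        gcongr
        exact exp_neg_two_mul_le_one_sub hp₀ hp
    _ ≤ (1 - p) ^ a := pow_le_pow_of_le_one (by linarith) (by linarith) ha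

lemma sqrt_div_le_meanIsolated {n r m : ℕ} {p : ℝ} (hn : n = r * m) (hm : 0 < m) (hr : 2 ≤ r)
    (hp₀ : 0 ≤ p) (hp : p ≤ 1 / 2) (hpn : n * p = Real.log n / 4) :
    √n / r ≤ meanIsolated (2 * m) p := by
  have hn₀ : 0 < n := by rw [hn]; positivity
  have h2m : 2 * m - 1 ≤ n := (Nat.sub_le _ _).trans (hn ▸ Nat.mul_le_mul_right m hr)
  calc √n / r = m * (√n)⁻¹ := by
        have sq : √n * √n = r * m := by rw [Real.mul_self_sqrt n.cast_nonneg, hn, Nat.cast_mul]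
        have : 0 < √(n : ℝ) := by positivity
        field_simp
        linarith
    _ ≤ (2 * m : ℕ) * (1 - p) ^ (2 * m - 1) := by
        gcongr
        exacts [by omega, inv_sqrt_le_one_sub_pow hn₀ hp₀ hp hpn h2m]

lemma tendsto_triangle_bound (r : ℝ) :
    Tendsto (fun x : ℝ => 4 * r / √x + 2 * (Real.log x / x)
      + r ^ 2 / 32 * (Real.log x ^ 3 / √x)) atTop (𝓝 0) := by
  have log_div : Tendsto (fun x => Real.log x / x) atTop (𝓝 0) :=
    Real.isLittleO_log_id_atTop.tendsto_div_nhds_zero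
  have log_cube_div : Tendsto (fun x => Real.log x ^ 3 / √x) atTop (𝓝 0) := by
    have := (isLittleO_log_rpow_rpow_atTop 3 one_half_pos).tendsto_div_nhds_zero
    simpa only [Real.sqrt_eq_rpow, ← Real.rpow_natCast, Nat.cast_ofNat] using this
  simpa using ((Real.tendsto_sqrt_atTop.const_div_atTop (4 * r)).add (log_div.const_mul 2)).add
    (log_cube_div.const_mul (r ^ 2 / 32))

lemma measureReal_hasCliqueFactor_log_div_le {n r m : ℕ} {p : I} (hn : n = r * m) (hm : 0 < m)
    (hr : 2 ≤ r) (hp : (p : ℝ) ≤ 1 / 2) (hpn : n * (p : ℝ) = Real.log n / 4) {A : Finset (Fin n)}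
    (hA : #A = 2 * m) :
    G(Fin n, p).real {H | HasCliqueFactor (completeOutside A ⊥ ⊔ H) r}
      ≤ 4 * r / √n + 2 * (Real.log n / n) + r ^ 2 / 32 * (Real.log n ^ 3 / √n) := by
  have hn₀ : (0 : ℝ) < n := by rw [hn]; positivity
  have mean_ge : √n / r ≤ meanIsolated #A p := hA ▸ sqrt_div_le_meanIsolated hn hm hr p.2.1 hp hpn
  have p_eq : (p : ℝ) = Real.log n / 4 / n := eq_div_of_mul_eq hn₀.ne' (by linarith)
  calc _ ≤ _ := measureReal_hasCliqueFactor_completeOutside_bot_le hn (by omega) hm hp hA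
    _ ≤ 4 / (√n / r) + 8 * p + 2 * r * (n * p) ^ 3 / (√n / r) := by
      rw [hpn]
      gcongr
    _ = _ := by
      rw [hpn, p_eq]
      field

lemma eventually_exists_graph_two {r : ℕ} (hr : 2 ≤ r) {ε : ℝ} (hε : 0 < ε) :
    ∀ᶠ n : ℕ in atTop, r ∣ n → ∃ G : SimpleGraph (Fin n),
      (∀ v, (1 - ((2 : ℕ) : ℝ) / r) * n ≤ degR G v) ∧
      Pr n (1 / 4 * (Real.log n / n)) (fun H => HasCliqueFactor (G ⊔ H) r) < ε := by
  filter_upwards [tendsto_natCast_atTop_atTop.eventually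
    ((tendsto_triangle_bound r).eventually_lt_const hε), eventually_gt_atTop 0] with n hbound hn₀
  rintro ⟨m, hn⟩
  have hm : 0 < m := Nat.pos_of_ne_zero (by rintro rfl; omega)
  have h2m : 2 * m ≤ #(univ : Finset (Fin n)) := by
    rw [card_fin, hn]
    exact Nat.mul_le_mul_right m hr
  obtain ⟨A, -, hA⟩ := exists_subset_card_eq h2m
  have log_le : Real.log n ≤ n := Real.log_le_self n.cast_nonneg
  have p_nonneg : 0 ≤ 1 / 4 * (Real.log n / n) := by positivity
  have p_le : 1 / 4 * (Real.log n / n) ≤ 1 / 2 := by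
    have := div_le_one_of_le₀ log_le n.cast_nonneg
    linarith
  set p : I := ⟨1 / 4 * (Real.log n / n), p_nonneg, by linarith⟩ with hp
  refine ⟨completeOutside A ⊥,
    one_sub_div_mul_le_degR hn (by omega) two_pos hm (k := 0) hA fun _ _ => Nat.zero_le _, ?_⟩
  refine (Pr_eq_measureReal n p _).trans_lt (lt_of_le_of_lt ?_ hbound)
  refine measureReal_hasCliqueFactor_log_div_le hn hm hr p_le ?_ hA
  rw [hp]
  field

end TriangleThreshold

section CliqueThreshold

lemma measureReal_exists_degreeIn_lt_le {V : Type*} [Finite V] {p : I} (A : Finset V) (k : ℕ) :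
    G(V, p).real {H | ∃ v ∈ A, degreeIn A H v < k}
      ≤ #A * (2 ^ k * (1 - p / 2 : ℝ) ^ (#A - 1)) := by
  have iUnion_eq : {H | ∃ v ∈ A, degreeIn A H v < k} = ⋃ v ∈ A, {H | degreeIn A H v < k} := by
    ext H
    simp
  rw [iUnion_eq, ← nsmul_eq_mul]
  exact (measureReal_biUnion_finset_le A _).trans
    (sum_le_card_nsmul _ _ _ fun v hv => measureReal_degreeIn_lt_le hv k)

section Construction

variable {n r s m k : ℕ} {p : I} {A : Finset (Fin n)}

lemma measureReal_hasCliqueFactor_le_integral (hn : n = r * m) (hr : 0 < r) (hs : 1 < s)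
    (hk : 0 < k) (hA : #A = s * m + k) (H₀ : SimpleGraph (Fin n)) :
    G(Fin n, p).real {H | HasCliqueFactor (completeOutside A H₀ ⊔ H) r}
      ≤ r / k * ∫ H, (#(cliquesIn A (s + 1) (H₀ ⊔ H)) : ℝ) ∂G(Fin n, p) := by
  have many_cliques (H : SimpleGraph (Fin n))
      (hH : HasCliqueFactor (completeOutside A H₀ ⊔ H) r) :
      (k : ℝ) ≤ r * #(cliquesIn A (s + 1) (H₀ ⊔ H)) := by
    have := card_add_card_isolatedIn_le_of_hasCliqueFactor hn hr hs A hH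
    exact_mod_cast (by omega : k ≤ r * #(cliquesIn A (s + 1) (H₀ ⊔ H)))
  have markov := measureReal_le_integral_div (μ := G(Fin n, p))
    (f := fun H => (r : ℝ) * (#(cliquesIn A (s + 1) (H₀ ⊔ H)) : ℝ))
    (fun H => by positivity) .of_finite (Nat.cast_pos.2 hk) many_cliques
  rwa [integral_const_mul, mul_div_right_comm] at markov

lemma integral_integral_card_cliquesIn_sup_le (A : Finset (Fin n)) (t : ℕ) :
    ∫ H₀, ∫ H, (#(cliquesIn A t (H₀ ⊔ H)) : ℝ) ∂G(Fin n, p) ∂G(Fin n, p)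
      ≤ n ^ t * (2 * p : ℝ) ^ t.choose 2 := by
  have hp₀ : 0 ≤ (p : ℝ) := p.2.1
  have hp₁ : 0 ≤ (1 - p : ℝ) := sub_nonneg.2 p.2.2
  have hA : (#A : ℝ) ≤ n := by exact_mod_cast card_finset_fin_le A
  rw [integral_integral_card_cliquesIn_sup]
  calc ((#A).choose t : ℝ) * (p + (1 - p) * p : ℝ) ^ t.choose 2
      ≤ (#A : ℝ) ^ t * (2 * p : ℝ) ^ t.choose 2 := by
        gcongr
        exacts [by exact_mod_cast Nat.choose_le_pow #A t, by nlinarith]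
    _ ≤ n ^ t * (2 * p : ℝ) ^ t.choose 2 := by gcongr

lemma measureReal_le_measureReal_hasCliqueFactor_le (hn : n = r * m) (hr : 0 < r) (hs : 1 < s)
    (hk : 0 < k) (hA : #A = s * m + k) {ε : ℝ} (hε : 0 < ε) :
    G(Fin n, p).real {H₀ | ε ≤
        G(Fin n, p).real {H | HasCliqueFactor (completeOutside A H₀ ⊔ H) r}}
      ≤ r / k * (n ^ (s + 1) * (2 * p : ℝ) ^ (s + 1).choose 2) / ε := by
  have markov := measureReal_le_integral_div (μ := G(Fin n, p)) (a := ε)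
    (f := fun H₀ => r / k * ∫ H, (#(cliquesIn A (s + 1) (H₀ ⊔ H)) : ℝ) ∂G(Fin n, p))
    (fun H₀ => by positivity) .of_finite hε
    fun H₀ hH₀ => le_trans hH₀ (measureReal_hasCliqueFactor_le_integral hn hr hs hk hA H₀)
  rw [integral_const_mul] at markov
  refine markov.trans ?_
  gcongr
  exact integral_integral_card_cliquesIn_sup_le A (s + 1)

lemma exists_completeOutside_of_lt_one (hn : n = r * m) (hr : 0 < r) (hs : 1 < s) (hk : 0 < k)
    (hA : #A = s * m + k) {ε : ℝ} (hε : 0 < ε)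
    (h : n * (2 ^ k * (1 - p / 2 : ℝ) ^ (#A - 1))
      + r / k * (n ^ (s + 1) * (2 * p : ℝ) ^ (s + 1).choose 2) / ε < 1) :
    ∃ H₀ : SimpleGraph (Fin n), (∀ v ∈ A, k ≤ degreeIn A H₀ v) ∧
      G(Fin n, p).real {H | HasCliqueFactor (completeOutside A H₀ ⊔ H) r} < ε := by
  by_contra! none_good
  set lowDegree := {H₀ : SimpleGraph (Fin n) | ∃ v ∈ A, degreeIn A H₀ v < k}
  set likelyFactor := {H₀ : SimpleGraph (Fin n) | ε ≤
    G(Fin n, p).real {H | HasCliqueFactor (completeOutside A H₀ ⊔ H) r}}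
  have cover : lowDegree ∪ likelyFactor = Set.univ := by
    refine Set.eq_univ_of_forall fun H₀ => or_iff_not_imp_left.2 fun hH₀ => none_good H₀ ?_
    simpa [lowDegree] using hH₀
  have hq : 0 ≤ (1 - p / 2 : ℝ) := by linarith [p.2.2]
  have hAn : (#A : ℝ) ≤ n := by exact_mod_cast card_finset_fin_le A
  have : (1 : ℝ) < 1 := calc
    1 = G(Fin n, p).real (lowDegree ∪ likelyFactor) := by rw [cover, probReal_univ]
    _ ≤ G(Fin n, p).real lowDegree + G(Fin n, p).real likelyFactor := measureReal_union_le _ _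
    _ ≤ #A * (2 ^ k * (1 - p / 2 : ℝ) ^ (#A - 1))
        + r / k * (n ^ (s + 1) * (2 * p : ℝ) ^ (s + 1).choose 2) / ε :=
      add_le_add (measureReal_exists_degreeIn_lt_le A k)
        (measureReal_le_measureReal_hasCliqueFactor_le hn hr hs hk hA hε)
    _ ≤ n * (2 ^ k * (1 - p / 2 : ℝ) ^ (#A - 1))
        + r / k * (n ^ (s + 1) * (2 * p : ℝ) ^ (s + 1).choose 2) / ε := by gcongr
    _ < 1 := h
  exact this.false

lemma two_pow_mul_one_sub_half_pow_le {k m a : ℕ} {p : ℝ} (hp₀ : 0 ≤ p) (hp : p ≤ 2)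
    (hk : (k : ℝ) ≤ p * m / 4) (hma : m ≤ a) :
    2 ^ k * (1 - p / 2) ^ a ≤ Real.exp (-(p * m / 4)) := by
  have two_pow_le : (2 : ℝ) ^ k ≤ Real.exp (p * m / 4) := calc
    (2 : ℝ) ^ k ≤ Real.exp 1 ^ k := by
      gcongr
      linarith [Real.add_one_le_exp (1 : ℝ)]
    _ = Real.exp k := by rw [← Real.exp_nat_mul, mul_one]
    _ ≤ Real.exp (p * m / 4) := Real.exp_le_exp.2 hk
  have pow_le : (1 - p / 2) ^ a ≤ Real.exp (-(p * m / 2)) := calc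
    (1 - p / 2) ^ a ≤ (1 - p / 2) ^ m := pow_le_pow_of_le_one (by linarith) (by linarith) hma
    _ ≤ Real.exp (-(p / 2)) ^ m := pow_le_pow_left₀ (by linarith) (Real.one_sub_le_exp_neg _) m
    _ = Real.exp (-(p * m / 2)) := by
      rw [← Real.exp_nat_mul]
      ring_nf
  calc 2 ^ k * (1 - p / 2) ^ a ≤ Real.exp (p * m / 4) * Real.exp (-(p * m / 2)) := by
        gcongr
        exact pow_nonneg (by linarith) a
    _ = Real.exp (-(p * m / 4)) := by
        rw [← Real.exp_add]
        ring_nf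

lemma exists_graph_of_expectation_bounds (hn : n = r * m) (hs : 1 < s) (hsr : s < r) {ε : ℝ}
    (hε : 0 < ε) (hpm : 1 ≤ (p * m / 4 : ℝ)) (hdegree : n * Real.exp (-(p * m / 4)) < 1 / 2)
    (hcliques : n ^ (s + 1) * (2 * p : ℝ) ^ (s + 1).choose 2 ≤ ε * (p * m) / (32 * r)) :
    ∃ G : SimpleGraph (Fin n), (∀ v, (1 - (s : ℝ) / r) * n ≤ degR G v) ∧
      G(Fin n, p).real {H | HasCliqueFactor (G ⊔ H) r} < ε := by
  set k := ⌊(p * m / 4 : ℝ)⌋₊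
  have k_le : (k : ℝ) ≤ p * m / 4 := Nat.floor_le (zero_le_one.trans hpm)
  have hk : 0 < k := Nat.floor_pos.2 hpm
  have le_k : (p * m / 8 : ℝ) ≤ k := by
    have : (p * m / 4 / 2 : ℝ) < k := Nat.div_two_lt_floor hpm
    linarith
  have k_le_m : k ≤ m := by
    have : (p : ℝ) * m ≤ m := mul_le_of_le_one_left m.cast_nonneg p.2.2
    exact_mod_cast (by linarith : (k : ℝ) ≤ m)
  have size_le : s * m + k ≤ #(univ : Finset (Fin n)) := by
    rw [card_fin, hn]
    calc s * m + k ≤ s * m + m := by gcongr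
      _ = (s + 1) * m := (Nat.succ_mul s m).symm
      _ ≤ r * m := Nat.mul_le_mul_right m hsr
  obtain ⟨A, -, hA⟩ := exists_subset_card_eq size_le
  have degree_bound : n * (2 ^ k * (1 - p / 2 : ℝ) ^ (#A - 1)) < 1 / 2 := by
    refine lt_of_le_of_lt ?_ hdegree
    gcongr
    refine two_pow_mul_one_sub_half_pow_le p.2.1 (p.2.2.trans one_le_two) k_le ?_
    have : 2 * m ≤ s * m := Nat.mul_le_mul_right m hs
    omega
  have clique_bound :
      r / k * (n ^ (s + 1) * (2 * p : ℝ) ^ (s + 1).choose 2) / ε ≤ 1 / 4 := by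
    have hr : (0 : ℝ) < r := Nat.cast_pos.2 (by omega)
    have hm : (0 : ℝ) < m := Nat.cast_pos.2 (by omega)
    have hpm₀ : 0 < (p * m : ℝ) := by linarith
    have hp₀ : (0 : ℝ) < p := (pos_iff_pos_of_mul_pos hpm₀).2 hm
    calc r / k * (n ^ (s + 1) * (2 * p : ℝ) ^ (s + 1).choose 2) / ε
        ≤ r / (p * m / 8) * (ε * (p * m) / (32 * r)) / ε := by gcongr
      _ = 1 / 4 := by field
  obtain ⟨H₀, hH₀, hPr⟩ := exists_completeOutside_of_lt_one hn (by omega) hs hk hA hε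
    ((add_lt_add_of_lt_of_le degree_bound clique_bound).trans (by norm_num))
  exact ⟨completeOutside A H₀, one_sub_div_mul_le_degR hn (by omega) (by omega) (by omega) hA hH₀,
    hPr⟩

end Construction

/-- The exponent `φ(s) = 2s / ((s - 1)(s + 2))` of the threshold `n ^ (-φ(s))`. -/
noncomputable def cliqueExponent (s : ℕ) : ℝ := 2 * s / ((s - 1) * (s + 2))

lemma cliqueExponent_nonneg {s : ℕ} (hs : 0 < s) : 0 ≤ cliqueExponent s := by
  have : (0 : ℝ) ≤ s - 1 := sub_nonneg.2 (Nat.one_le_cast.2 hs)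
  rw [cliqueExponent]
  positivity

lemma cliqueExponent_lt_one {s : ℕ} (hs : 2 < s) : cliqueExponent s < 1 := by
  have hs' : (2 : ℝ) < s := by exact_mod_cast hs
  rw [cliqueExponent, div_lt_one (by nlinarith)]
  nlinarith

lemma cliqueExponent_mul_choose {s : ℕ} (hs : 1 < s) :
    cliqueExponent s * (s + 1).choose 2 = cliqueExponent s + s := by
  have : (0 : ℝ) < s - 1 := sub_pos.2 (Nat.one_lt_cast.2 hs)
  rw [cliqueExponent, Nat.cast_choose_two]
  push_cast
  field_simp
  ring

lemma pow_mul_two_mul_rpow_pow_le {s : ℕ} (hs : 1 < s) {x c : ℝ} (hx : 0 < x) (hc₀ : 0 ≤ c)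
    (hc : c ≤ 1 / 2) :
    x ^ (s + 1) * (2 * (c * x ^ (-cliqueExponent s))) ^ (s + 1).choose 2
      ≤ 4 * c * (c * x ^ (-cliqueExponent s) * x) := by
  have balance : x ^ (s + 1) * (x ^ (-cliqueExponent s)) ^ (s + 1).choose 2
      = x ^ (-cliqueExponent s) * x := by
    rw [← Real.rpow_natCast, ← Real.rpow_natCast, ← Real.rpow_mul hx.le, ← Real.rpow_add hx,
      ← Real.rpow_add_one hx.ne', neg_mul, cliqueExponent_mul_choose hs]
    push_cast
    ring_nf
  have two_le_choose : 2 ≤ (s + 1).choose 2 :=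
    le_trans (by decide) (Nat.choose_le_choose 2 (Nat.succ_le_succ hs))
  calc x ^ (s + 1) * (2 * (c * x ^ (-cliqueExponent s))) ^ (s + 1).choose 2
      = (2 * c) ^ (s + 1).choose 2 * (x ^ (-cliqueExponent s) * x) := by
        rw [← balance, ← mul_assoc 2, mul_pow]
        ring
    _ ≤ (2 * c) ^ 2 * (x ^ (-cliqueExponent s) * x) := by
        gcongr ?_ * _
        exact pow_le_pow_of_le_one (by linarith) (by linarith) two_le_choose
    _ = 4 * c * (c * x ^ (-cliqueExponent s) * x) := by ring

lemma tendsto_mul_exp_neg_mul_rpow {b δ : ℝ} (hb : 0 < b) (hδ : 0 < δ) :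
    Tendsto (fun x : ℝ => x * Real.exp (-(b * x ^ δ))) atTop (𝓝 0) := by
  refine ((tendsto_rpow_mul_exp_neg_mul_atTop_nhds_zero (1 / δ) b hb).comp
    (tendsto_rpow_atTop hδ)).congr' ?_
  filter_upwards [eventually_gt_atTop 0] with x hx
  rw [Function.comp_apply, neg_mul, ← Real.rpow_mul hx.le, mul_one_div_cancel hδ.ne', Real.rpow_one]

section Threshold

variable {r s : ℕ} {ε c : ℝ}

lemma exists_graph_of_rpow_bounds {n : ℕ} (hs : 1 < s) (hsr : s < r) (hε : 0 < ε) (hc₀ : 0 < c)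
    (hc : c ≤ 1 / 2) (hcε : c ≤ ε / (128 * r ^ 2)) (hn₀ : 0 < n) (hrn : r ∣ n)
    (hlarge : 1 ≤ c / (4 * r) * (n : ℝ) ^ (1 - cliqueExponent s))
    (hexp : n * Real.exp (-(c / (4 * r) * (n : ℝ) ^ (1 - cliqueExponent s))) < 1 / 2) :
    ∃ G : SimpleGraph (Fin n), (∀ v, (1 - (s : ℝ) / r) * n ≤ degR G v) ∧
      Pr n (c * (n : ℝ) ^ (-cliqueExponent s)) (fun H => HasCliqueFactor (G ⊔ H) r) < ε := by
  obtain ⟨m, hn⟩ := hrn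
  have hr : (0 : ℝ) < r := Nat.cast_pos.2 (by omega)
  have hn' : (0 : ℝ) < n := Nat.cast_pos.2 hn₀
  have hnrm : (n : ℝ) = r * m := by exact_mod_cast hn
  have rpow_le_one : (n : ℝ) ^ (-cliqueExponent s) ≤ 1 :=
    Real.rpow_le_one_of_one_le_of_nonpos (Nat.one_le_cast.2 hn₀)
      (neg_nonpos.2 (cliqueExponent_nonneg (by omega)))
  set p : I := ⟨c * (n : ℝ) ^ (-cliqueExponent s), by positivity,
    mul_le_one₀ (hc.trans one_half_lt_one.le) (by positivity) rpow_le_one⟩ with hp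
  have pm_eq : c / (4 * r) * (n : ℝ) ^ (1 - cliqueExponent s) = p * m / 4 := by
    rw [hp, sub_eq_add_neg, Real.rpow_add hn', Real.rpow_one]
    nth_rw 1 [hnrm]
    field
  rw [pm_eq] at hlarge hexp
  have cliques_le : (n : ℝ) ^ (s + 1) * (2 * p : ℝ) ^ (s + 1).choose 2
      ≤ ε * (p * m) / (32 * r) := calc
    _ ≤ 4 * c * (p * n : ℝ) := pow_mul_two_mul_rpow_pow_le (by omega) hn' hc₀.le hc
    _ ≤ 4 * (ε / (128 * r ^ 2)) * (p * n : ℝ) := by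
      have := p.2.1
      gcongr
    _ = ε * (p * m) / (32 * r) := by
      rw [hnrm]
      field
  obtain ⟨G, hG, hPr⟩ := exists_graph_of_expectation_bounds hn hs hsr hε hlarge hexp cliques_le
  exact ⟨G, hG, (Pr_eq_measureReal n p _).trans_lt hPr⟩

lemma eventually_exists_graph_of_two_lt (hs : 2 < s) (hsr : s < r) (hε : 0 < ε) (hc₀ : 0 < c)
    (hc : c ≤ 1 / 2) (hcε : c ≤ ε / (128 * r ^ 2)) :
    ∀ᶠ n : ℕ in atTop, r ∣ n → ∃ G : SimpleGraph (Fin n),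
      (∀ v, (1 - (s : ℝ) / r) * n ≤ degR G v) ∧
      Pr n (c * (n : ℝ) ^ (-cliqueExponent s)) (fun H => HasCliqueFactor (G ⊔ H) r) < ε := by
  have hδ : 0 < 1 - cliqueExponent s := sub_pos.2 (cliqueExponent_lt_one hs)
  have hb : 0 < c / (4 * r) := div_pos hc₀ (by norm_cast; omega)
  have large := ((tendsto_rpow_atTop hδ).const_mul_atTop hb).eventually_ge_atTop 1
  have exp_small := (tendsto_mul_exp_neg_mul_rpow hb hδ).eventually_lt_const one_half_pos
  filter_upwards [eventually_gt_atTop 0, tendsto_natCast_atTop_atTop.eventually large,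
    tendsto_natCast_atTop_atTop.eventually exp_small] with n hn₀ hlarge hexp hrn
  exact exists_graph_of_rpow_bounds (by omega) hsr hε hc₀ hc hcε hn₀ hrn hlarge hexp

end Threshold

end CliqueThreshold

/-- Theorem 1.3, lower bound: for `1 < s < r` and `ε > 0` there is `c > 0`
such that for all sufficiently large `n` divisible by `r` there is an `n`-vertex graph `G`
with minimum degree at least `(1 - s/r) n` such that with `p = c ⬝ p_s(n)` the probability
that `G ∪ G_{n,p}` has a `K_r`-factor is less than `ε`. -/
theorem statement1 (r s : ℕ) (hs : 1 < s) (hsr : s < r) (ε : ℝ) (hε : 0 < ε) :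
    ∃ c : ℝ, 0 < c ∧ ∃ n₀ : ℕ, ∀ n : ℕ, n₀ ≤ n → r ∣ n →
      ∃ G : SimpleGraph (Fin n),
        (∀ v, (1 - (s : ℝ) / (r : ℝ)) * n ≤ (degR G v : ℝ)) ∧
        Pr n (c * pThr s n) (fun H => HasCliqueFactor (G ⊔ H) r) < ε := by
  simp_rw [← eventually_atTop]
  obtain rfl | hs₂ : 2 = s ∨ 2 < s := eq_or_lt_of_le hs
  · refine ⟨1 / 4, by norm_num, ?_⟩
    simpa only [pThr, if_true] using eventually_exists_graph_two hsr.le hε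
  · have hr : (0 : ℝ) < r := Nat.cast_pos.2 (by omega)
    have pThr_eq (n : ℕ) : pThr s n = (n : ℝ) ^ (-cliqueExponent s) := by
      rw [pThr, if_neg hs₂.ne', cliqueExponent, neg_div]
    refine ⟨min (1 / 2) (ε / (128 * r ^ 2)), by positivity, ?_⟩
    simp_rw [pThr_eq]
    exact eventually_exists_graph_of_two_lt hs₂ hsr hε (by positivity) (min_le_left _ _)
      (min_le_right _ _)
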